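/- For every natural number n, 56·(i(n) + 1) > n; that is, i(n) > n/56 − 1, where i(n) is the number of irreducible pairs of partitions of n. -/

import Mathlib

/-- The product, with multiplicity, of the factorials of the elements of a multiset. -/
def factorialProd (A : Multiset ℕ) : ℕ := (A.map Nat.factorial).prod

/-- Two partitions of `n` form an irreducible pair if they are distinct, have no parts in
common, and yield the same multinomial coefficient (equal products of factorials of parts). -/
def IsIrredPair {n : ℕ} (a b : Nat.Partition n) : Prop :=
  a ≠ b ∧ (∀ j : ℕ, ¬(j ∈ a.parts ∧ j ∈ b.parts)) ∧
    factorialProd a.parts = factorialProd b.parts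

/-- `numIrredPairs n`: the number of (unordered) irreducible pairs of partitions of `n`. -/
noncomputable def numIrredPairs (n : ℕ) : ℕ :=
  Set.ncard {s : Set (Nat.Partition n) | ∃ a b, IsIrredPair a b ∧ s = {a, b}}

/-!
The identities `6! 1! 1! = 5! 3!` and `4! 1! 1! 1! = 3! 2! 2!` have part sums `8` and `7`, and no
part on the left of either one occurs on the right of either one. Taking the first identity `a`
times and the second `b` times therefore gives an irreducible pair of partitions of `8a + 7b`, from
which `(a, b)` can be read off. Hence `i(n)` is at least the number of solutions of `8a + 7b = n`,
and there are at least `⌊n / 56⌋` of those because `7` and `8` are coprime.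
-/

section LinearSolutions

variable {p q n : ℕ}

/-- The solutions `(a, b)` in natural numbers of the linear equation `p * a + q * b = n`. -/
def linearSolutions (p q n : ℕ) : Set (ℕ × ℕ) := {c | p * c.1 + q * c.2 = n}

lemma finite_linearSolutions (hp : 0 < p) (hq : 0 < q) : (linearSolutions p q n).Finite := by
  refine (Set.finite_Iic (n, n)).subset fun c (hc : p * c.1 + q * c.2 = n) ↦ ⟨?_, ?_⟩
  · exact (Nat.le_mul_of_pos_left _ hp).trans (hc ▸ Nat.le_add_right _ _)
  · exact (Nat.le_mul_of_pos_left _ hq).trans (hc ▸ Nat.le_add_left _ _)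

lemma exists_mem_linearSolutions {b : ℕ} (hle : q * b ≤ n) (hb : q * b ≡ n [MOD p]) :
    ∃ a, (a, b) ∈ linearSolutions p q n := by
  obtain ⟨a, ha⟩ := (Nat.modEq_iff_dvd' hle).mp hb
  exact ⟨a, show p * a + q * b = n by omega⟩

theorem div_le_ncard_linearSolutions (hp : 0 < p) (hq : 0 < q) (hpq : p.Coprime q) :
    n / (p * q) ≤ (linearSolutions p q n).ncard := by
  obtain ⟨r, hr, hrn⟩ := Nat.exists_mul_mod_eq_of_coprime n hpq.symm hp.ne'
  have hle (t : Fin (n / (p * q))) : q * (r + p * t) ≤ n :=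
    calc q * (r + p * t) ≤ q * (p + p * t) := by gcongr
      _ = p * q * (t + 1) := by ring
      _ ≤ p * q * (n / (p * q)) := by gcongr; exact t.isLt
      _ ≤ n := Nat.mul_div_le n (p * q)
  have hmod (t : ℕ) : q * (r + p * t) ≡ n [MOD p] := by
    rw [mul_add, mul_left_comm]
    simpa [Nat.ModEq] using hrn
  choose a ha using fun t ↦ exists_mem_linearSolutions (hle t) (hmod t)
  let solution (t : Fin (n / (p * q))) : linearSolutions p q n := ⟨(a t, r + p * t), ha t⟩
  have hinj : Function.Injective solution := by
    intro s t hst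
    have hsnd : r + p * (s : ℕ) = r + p * t := congrArg (fun c ↦ c.1.2) hst
    exact Fin.ext (Nat.eq_of_mul_eq_mul_left hp (Nat.add_left_cancel hsnd))
  have := (finite_linearSolutions (n := n) hp hq).to_subtype
  simpa using Nat.card_le_card_of_injective solution hinj

end LinearSolutions

lemma factorialProd_add (A B : Multiset ℕ) :
    factorialProd (A + B) = factorialProd A * factorialProd B := by
  simp [factorialProd]

lemma factorialProd_nsmul (k : ℕ) (A : Multiset ℕ) :
    factorialProd (k • A) = factorialProd A ^ k := by
  simp [factorialProd, Multiset.map_nsmul, Multiset.prod_nsmul]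

section IrredPairs

variable {n : ℕ}

lemma ne_of_disjoint_parts (hn : n ≠ 0) {a b : n.Partition} (h : Disjoint a.parts b.parts) :
    a ≠ b := by
  rintro rfl
  have hparts : a.parts = 0 := disjoint_self.mp h
  exact hn (by simpa [hparts] using a.parts_sum.symm)

lemma IsIrredPair.of_disjoint (hn : n ≠ 0) {a b : n.Partition} (h : Disjoint a.parts b.parts)
    (hprod : factorialProd a.parts = factorialProd b.parts) : IsIrredPair a b :=
  ⟨ne_of_disjoint_parts hn h, fun _ hj ↦ Multiset.disjoint_left.mp h hj.1 hj.2, hprod⟩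

theorem card_le_numIrredPairs {ι : Type*} {f g : ι → n.Partition} (hf : Function.Injective f)
    (hfg : ∀ i j, f i ≠ g j) (hirred : ∀ i, IsIrredPair (f i) (g i)) :
    Nat.card ι ≤ numIrredPairs n := by
  have hinj : Function.Injective fun i ↦ ({f i, g i} : Set n.Partition) := by
    intro i j hij
    have hmem : f i ∈ ({f j, g j} : Set n.Partition) := hij.subset (Set.mem_insert _ _)
    exact hf (hmem.resolve_right (hfg i j))
  have hsub : Set.range (fun i ↦ ({f i, g i} : Set n.Partition)) ⊆
      {s | ∃ a b, IsIrredPair a b ∧ s = {a, b}} := by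
    rintro _ ⟨i, rfl⟩
    exact ⟨f i, g i, hirred i, rfl⟩
  calc Nat.card ι = (Set.range fun i ↦ ({f i, g i} : Set n.Partition)).ncard :=
        (Nat.card_range_of_injective hinj).symm
    _ ≤ numIrredPairs n := Set.ncard_le_ncard hsub (Set.toFinite _)

end IrredPairs

section TwoBlockPartitions

/-- The parts on the left of `6! 1! 1! = 5! 3!`, taken `c.1` times, together with the parts on the
left of `4! 1! 1! 1! = 3! 2! 2!`, taken `c.2` times. -/
def leftParts (c : ℕ × ℕ) : Multiset ℕ := c.1 • {6, 1, 1} + c.2 • {4, 1, 1, 1}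

/-- The parts on the right of `6! 1! 1! = 5! 3!`, taken `c.1` times, together with the parts on the
right of `4! 1! 1! 1! = 3! 2! 2!`, taken `c.2` times. -/
def rightParts (c : ℕ × ℕ) : Multiset ℕ := c.1 • {5, 3} + c.2 • {3, 2, 2}

lemma mem_of_mem_leftParts {c : ℕ × ℕ} {j : ℕ} (hj : j ∈ leftParts c) :
    j ∈ ({1, 4, 6} : Set ℕ) := by
  have hblock := (Multiset.mem_add.mp hj).imp Multiset.mem_of_mem_nsmul Multiset.mem_of_mem_nsmul
  simp only [Multiset.insert_eq_cons, Multiset.mem_cons, Multiset.mem_singleton, or_self,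
    Set.mem_insert_iff, Set.mem_singleton_iff] at hblock ⊢
  tauto

lemma mem_of_mem_rightParts {c : ℕ × ℕ} {j : ℕ} (hj : j ∈ rightParts c) :
    j ∈ ({2, 3, 5} : Set ℕ) := by
  have hblock := (Multiset.mem_add.mp hj).imp Multiset.mem_of_mem_nsmul Multiset.mem_of_mem_nsmul
  simp only [Multiset.insert_eq_cons, Multiset.mem_cons, Multiset.mem_singleton, or_self,
    Set.mem_insert_iff, Set.mem_singleton_iff] at hblock ⊢
  tauto

lemma sum_leftParts (c : ℕ × ℕ) : (leftParts c).sum = 8 * c.1 + 7 * c.2 := by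
  simp [leftParts, Multiset.sum_nsmul, mul_comm]

lemma sum_rightParts (c : ℕ × ℕ) : (rightParts c).sum = 8 * c.1 + 7 * c.2 := by
  simp [rightParts, Multiset.sum_nsmul, mul_comm]

lemma disjoint_leftParts_rightParts (c d : ℕ × ℕ) : Disjoint (leftParts c) (rightParts d) := by
  refine Multiset.disjoint_left.mpr fun {j} hl hr ↦ ?_
  rcases mem_of_mem_leftParts hl with rfl | rfl | rfl <;>
    simpa using mem_of_mem_rightParts hr

lemma leftParts_injective : Function.Injective leftParts := by
  intro c d h
  have hcount (j : ℕ) := congrArg (Multiset.count j) h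
  exact Prod.ext (by simpa [leftParts] using hcount 6) (by simpa [leftParts] using hcount 4)

lemma factorialProd_leftParts_eq_factorialProd_rightParts (c : ℕ × ℕ) :
    factorialProd (leftParts c) = factorialProd (rightParts c) := by
  have h₁ : factorialProd {6, 1, 1} = factorialProd {5, 3} := by decide
  have h₂ : factorialProd {4, 1, 1, 1} = factorialProd {3, 2, 2} := by decide
  simp only [leftParts, rightParts, factorialProd_add, factorialProd_nsmul, h₁, h₂]

variable {n : ℕ}

/-- The partition of `n = 8 * a + 7 * b` with parts `leftParts (a, b)`. -/
def leftPartition (c : linearSolutions 8 7 n) : n.Partition where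
  parts := leftParts c
  parts_pos hj := by rcases mem_of_mem_leftParts hj with rfl | rfl | rfl <;> norm_num
  parts_sum := (sum_leftParts c).trans c.2

/-- The partition of `n = 8 * a + 7 * b` with parts `rightParts (a, b)`. -/
def rightPartition (c : linearSolutions 8 7 n) : n.Partition where
  parts := rightParts c
  parts_pos hj := by rcases mem_of_mem_rightParts hj with rfl | rfl | rfl <;> norm_num
  parts_sum := (sum_rightParts c).trans c.2

lemma leftPartition_injective : Function.Injective (leftPartition (n := n)) := fun _ _ h ↦
  Subtype.ext (leftParts_injective (congrArg Nat.Partition.parts h))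

theorem ncard_linearSolutions_le_numIrredPairs (hn : n ≠ 0) :
    (linearSolutions 8 7 n).ncard ≤ numIrredPairs n := by
  have hdisj (c d : linearSolutions 8 7 n) :
      Disjoint (leftPartition c).parts (rightPartition d).parts :=
    disjoint_leftParts_rightParts c d
  exact card_le_numIrredPairs leftPartition_injective
    (fun c d ↦ ne_of_disjoint_parts hn (hdisj c d))
    fun c ↦ .of_disjoint hn (hdisj c c)
      (factorialProd_leftParts_eq_factorialProd_rightParts c)

end TwoBlockPartitions

/-- `56·(i(n) + 1) > n`, i.e. `i(n) > n/56 − 1`. -/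
theorem irredPairs_lower_bound (n : ℕ) : n < 56 * (numIrredPairs n + 1) := by
  obtain rfl | hn := eq_or_ne n 0
  · positivity
  have hdiv : n / 56 ≤ numIrredPairs n :=
    calc n / 56 ≤ (linearSolutions 8 7 n).ncard :=
          div_le_ncard_linearSolutions (p := 8) (q := 7) (by norm_num) (by norm_num)
            (by norm_num)
      _ ≤ numIrredPairs n := ncard_linearSolutions_le_numIrredPairs hn
  lia
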